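/- Let G be a group generated by a finite set S and let H_1,…,H_l be stable subgroups of G. Then among all subgroups of G of the form H_{i(1)}^{g_1} ∩ ⋯ ∩ H_{i(n)}^{g_n}, where n ∈ ℕ, i(j) ∈ {1,…,l} and g_j ∈ G, there are only finitely many G-conjugacy classes. -/

import Mathlib

open Pointwise

section BasicDefs

variable {G : Type*} [Group G]

/-- The word length of `g` with respect to the generating set `S`
(words use letters from `S ∪ S⁻¹`). -/
noncomputable def wordLength (S : Set G) (g : G) : ℕ :=
  sInf {n : ℕ | ∃ l : List G, l.length = n ∧ (∀ x ∈ l, x ∈ S ∨ x⁻¹ ∈ S) ∧ l.prod = g}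

/-- The word metric on `G` with respect to the generating set `S`. -/
noncomputable def wordDist (S : Set G) (g h : G) : ℝ :=
  (wordLength S (g⁻¹ * h) : ℝ)

/-- The closed `r`-neighborhood of a subset `A` with respect to the word metric `d_S`. -/
def nbhd (S : Set G) (r : ℝ) (A : Set G) : Set G :=
  {g : G | ∃ a ∈ A, wordDist S g a ≤ r}

/-- The distance between two subsets: the infimum of distances between their elements. -/
noncomputable def setDist (S : Set G) (A B : Set G) : ℝ :=
  sInf {r : ℝ | ∃ a ∈ A, ∃ b ∈ B, r = wordDist S a b}

/-- The conjugate subgroup `H^g = g H g⁻¹`. -/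
def conjSub (g : G) (H : Subgroup G) : Subgroup G :=
  H.map (MulAut.conj g).toMonoidHom

end BasicDefs

/-- `γ` restricted to `{0, …, n}` is a `(K, ε)`-quasigeodesic for the distance function `d`. -/
def IsQuasigeodesic {α : Type*} (d : α → α → ℝ) (K ε : ℝ) (n : ℕ) (γ : ℕ → α) : Prop :=
  ∀ i j : ℕ, i ≤ n → j ≤ n →
    (1 / K) * |(i : ℝ) - (j : ℝ)| - ε ≤ d (γ i) (γ j) ∧
      d (γ i) (γ j) ≤ K * |(i : ℝ) - (j : ℝ)| + ε

/-- `γ` restricted to `{0, …, n}` is a geodesic for the distance function `d`. -/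
def IsGeodesic {α : Type*} (d : α → α → ℝ) (n : ℕ) (γ : ℕ → α) : Prop :=
  ∀ i j : ℕ, i ≤ n → j ≤ n → d (γ i) (γ j) = |(i : ℝ) - (j : ℝ)|

/-- The path `γ` (on `{0, …, n}`) is `f`-stable: every `(K, ε)`-quasigeodesic with endpoints
on `γ` stays in the `f K ε`-neighborhood of `γ`. -/
def IsStablePath {α : Type*} (d : α → α → ℝ) (f : ℝ → ℝ → ℝ) (n : ℕ) (γ : ℕ → α) : Prop :=
  ∀ K ε : ℝ, 1 ≤ K → 0 ≤ ε → ∀ (m : ℕ) (η : ℕ → α),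
    IsQuasigeodesic d K ε m η →
    (∃ i ≤ n, η 0 = γ i) → (∃ i ≤ n, η m = γ i) →
    ∀ j ≤ m, ∃ i ≤ n, d (η j) (γ i) ≤ f K ε

/-- The Gromov product `⟨x, y⟩_w` with respect to a distance function `d`. -/
noncomputable def gromovProd {α : Type*} (d : α → α → ℝ) (w x y : α) : ℝ :=
  (d w x + d w y - d x y) / 2

/-- Gromov hyperbolicity of a distance function, via the four-point condition. -/
def IsHyperbolicDist {α : Type*} (d : α → α → ℝ) : Prop :=
  ∃ δ : ℝ, 0 ≤ δ ∧ ∀ w x y z : α,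
    min (gromovProd d w x y) (gromovProd d w y z) - δ ≤ gromovProd d w x z

section GroupDefs

variable {G : Type*} [Group G]

/-- `H` is a stable subgroup of `(G, d_S)` with stability function `f`: `H` has a finite
generating set `T` such that the inclusion `(H, d_T) → (G, d_S)` is a quasi-isometric
embedding sending every `d_T`-geodesic to an `f`-stable quasigeodesic of `(G, d_S)`. -/
def IsStableSubgroupWith (S : Set G) (H : Subgroup G) (f : ℝ → ℝ → ℝ) : Prop :=
  ∃ T : Set H, T.Finite ∧ Subgroup.closure T = ⊤ ∧
    (∃ μ c : ℝ, 1 ≤ μ ∧ 0 ≤ c ∧ ∀ h₁ h₂ : H,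
      (1 / μ) * wordDist T h₁ h₂ - c ≤ wordDist S (h₁ : G) (h₂ : G) ∧
        wordDist S (h₁ : G) (h₂ : G) ≤ μ * wordDist T h₁ h₂ + c) ∧
    ∀ (n : ℕ) (γ : ℕ → H), IsGeodesic (wordDist T) n γ →
      (∃ K ε : ℝ, 1 ≤ K ∧ 0 ≤ ε ∧
        IsQuasigeodesic (wordDist S) K ε n (fun i => (γ i : G))) ∧
      IsStablePath (wordDist S) f n (fun i => (γ i : G))

/-- `H` is a stable subgroup of `(G, d_S)`. -/
def IsStableSubgroup (S : Set G) (H : Subgroup G) : Prop :=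
  ∃ f : ℝ → ℝ → ℝ, IsStableSubgroupWith S H f

/-- The family `Q` of subgroups is hyperbolically embedded in `(G, X)`:
(Q1) geometric separation, (Q2) finite generation, (Q3) uniform quasi-isometric embedding. -/
def IsHypEmbFamily {G : Type*} [Group G] {ι : Type*} (X : Set G) (Q : ι → Subgroup G) : Prop :=
  (∀ ε : ℝ, 0 < ε → ∃ R : ℝ, ∀ (g : G) (i j : ι),
      (∃ a ∈ (Q i : Set G) ∩ nbhd X ε (g • (Q j : Set G)),
        ∃ b ∈ (Q i : Set G) ∩ nbhd X ε (g • (Q j : Set G)), R ≤ wordDist X a b) →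
      i = j ∧ g ∈ Q i) ∧
  ∃ Y : ι → Set G, (∀ i, (Y i).Finite ∧ Y i ⊆ (Q i : Set G) ∧ Subgroup.closure (Y i) = Q i) ∧
    ∃ μ c : ℝ, 1 ≤ μ ∧ 0 ≤ c ∧ ∀ i : ι, ∀ h ∈ Q i,
      (wordLength (Y i) h : ℝ) ≤ μ * (wordLength X h : ℝ) + c

/-- The subset `H` of `G` satisfies the WPD condition in `(G, X)`. -/
def WPDSet (X : Set G) (H : Set G) : Prop :=
  ∀ ε : ℝ, 0 < ε → ∃ N : ℝ, 0 < N ∧ ∀ h₁ h₂ : G, h₁ ∈ H → h₂ ∈ H →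
    N < wordDist X h₁ h₂ →
    {g : G | wordDist X h₁ (g * h₁) < ε ∧ wordDist X h₂ (g * h₂) < ε}.Finite

/-- A quasimorphism on `G`. -/
def IsQuasimorphism (q : G → ℝ) : Prop :=
  ∃ D : ℝ, 0 ≤ D ∧ ∀ x y : G, |q (x * y) - q x - q y| ≤ D

/-- A homogeneous quasimorphism on `G`. -/
def IsHomogeneousQM (q : G → ℝ) : Prop :=
  IsQuasimorphism q ∧ ∀ (x : G) (n : ℕ), q (x ^ n) = (n : ℝ) * q x

/-- `H` is a quasiconvex subgroup of `(G, d_S)`: every geodesic with endpoints in `H`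
lies in a uniformly bounded neighborhood of `H`. -/
def IsQuasiconvex (S : Set G) (H : Subgroup G) : Prop :=
  ∃ C : ℝ, 0 ≤ C ∧ ∀ (n : ℕ) (γ : ℕ → G), IsGeodesic (wordDist S) n γ →
    γ 0 ∈ H → γ n ∈ H → ∀ i ≤ n, ∃ h ∈ H, wordDist S (γ i) h ≤ C

end GroupDefs

/-!
Intersections of conjugates of the `H_i` are treated according to whether they are finite.

A stable subgroup has slim triangles for its own word metric `d_T`: pushed forward to `G`, a side of
a triangle, cut at its point nearest to the opposite vertex and continued to that vertex by a
shortest geodesic, is a quasigeodesic with endpoints on the image of another side. A finite subgroup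
`A` of such a group moves a Chebyshev centre `x` of its orbit `A · 1` by a bounded amount, because
in a slim space two Chebyshev centres of the same set are uniformly close. Hence `x⁻¹ A x` lies in a
fixed finite ball.

Let now `a` be a long element of an infinite intersection of `H₀^{g₀}, H₁^{g₁}, …`. It maps `g₀` to
the other end of a long path in the coset `g₀ H₀`, the image of a geodesic of `H₀`. As `a` also
preserves `g_j H_j`, both ends of the path are at distance at most `d_S(g₀, g_j)` from `g_j H_j`.
Extending a subpath at both ends by shortest geodesics to points of `g_j H_j` gives a quasigeodesic
whose constants do not depend on `j`, so by stability the midpoint of the path is uniformly close to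
`g_j H_j`. Translating the midpoint to `1` leaves only finitely many possibilities for each
conjugate. The same bound limits the number of distinct conjugates in the family, so that infinite
families of conjugates cause no additional difficulty.
-/

section Paths

variable {α : Type*} {d : α → α → ℝ} {K ε : ℝ} {m n p : ℕ} {γ σ β : ℕ → α}

/-- Discrete version of a geodesic space: any two points are joined by a geodesic path of
integer length. The vertex set of a connected graph is the motivating example. -/
def HasDiscreteGeodesics (d : α → α → ℝ) : Prop :=
  ∀ x y, ∃ (n : ℕ) (γ : ℕ → α), γ 0 = x ∧ γ n = y ∧ IsGeodesic d n γ

/-- The concatenation of the path `σ` on `{0, …, m}` with the path `β`; it is meant for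
`σ m = β 0`, a value that it visits only once. -/
def concatPath (m : ℕ) (σ β : ℕ → α) (i : ℕ) : α :=
  if i ≤ m then σ i else β (i - m)

theorem concatPath_of_le {i : ℕ} (hi : i ≤ m) : concatPath m σ β i = σ i :=
  if_pos hi

theorem concatPath_add (hσβ : σ m = β 0) (i : ℕ) : concatPath m σ β (m + i) = β i := by
  rcases Nat.eq_zero_or_pos i with rfl | hi
  · simpa [concatPath] using hσβ
  · simp [concatPath, hi.ne']

theorem abs_natCast_sub_natCast_of_le {i j : ℕ} (hij : i ≤ j) : |(i : ℝ) - j| = j - i := by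
  rw [abs_sub_comm, abs_of_nonneg (by simpa using hij)]

theorem IsGeodesic.eq_sub (h : IsGeodesic d n γ) {i j : ℕ} (hij : i ≤ j) (hj : j ≤ n) :
    d (γ i) (γ j) = (j : ℝ) - i :=
  (h i j (hij.trans hj) hj).trans (abs_natCast_sub_natCast_of_le hij)

theorem IsGeodesic.eq_length (h : IsGeodesic d n γ) : d (γ 0) (γ n) = n := by
  simpa using h.eq_sub n.zero_le le_rfl

theorem IsGeodesic.isQuasigeodesic (h : IsGeodesic d n γ) : IsQuasigeodesic d 1 0 n γ :=
  fun i j hi hj => by simp [h i j hi hj]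

theorem IsQuasigeodesic.bounds_of_le (h : IsQuasigeodesic d K ε n γ) {i j : ℕ} (hij : i ≤ j)
    (hj : j ≤ n) : (1 / K) * ((j : ℝ) - i) - ε ≤ d (γ i) (γ j) ∧
      d (γ i) (γ j) ≤ K * ((j : ℝ) - i) + ε :=
  abs_natCast_sub_natCast_of_le hij ▸ h i j (hij.trans hj) hj

theorem IsQuasigeodesic.sub_le (h : IsQuasigeodesic d K ε n γ) (hK : 0 < K)
    {i j : ℕ} (hij : i ≤ j) (hj : j ≤ n) : (j : ℝ) - i ≤ K * (d (γ i) (γ j) + ε) := by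
  have hlow := (h.bounds_of_le hij hj).1
  rwa [sub_le_iff_le_add, one_div, inv_mul_le_iff₀ hK] at hlow

theorem IsQuasigeodesic.mono {K' ε' : ℝ} (h : IsQuasigeodesic d K ε n γ) (hK : 0 < K)
    (hKK' : K ≤ K') (hεε' : ε ≤ ε') : IsQuasigeodesic d K' ε' n γ := fun i j hi hj =>
  ⟨(by gcongr : 1 / K' * |(i : ℝ) - j| - ε' ≤ 1 / K * |(i : ℝ) - j| - ε).trans (h i j hi hj).1,
    (h i j hi hj).2.trans (by gcongr)⟩

theorem IsQuasigeodesic.comp_add_left (h : IsQuasigeodesic d K ε n γ) (hpm : p + m ≤ n) :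
    IsQuasigeodesic d K ε m (fun i => γ (p + i)) := fun i j hi hj => by
  simpa using h (p + i) (p + j) (by lia) (by lia)

theorem IsQuasigeodesic.reverse (h : IsQuasigeodesic d K ε n γ) :
    IsQuasigeodesic d K ε n (fun i => γ (n - i)) := fun i j hi hj => by
  simpa [Nat.cast_sub hi, Nat.cast_sub hj, abs_sub_comm] using
    h (n - i) (n - j) (n.sub_le i) (n.sub_le j)

end Paths

section QuasigeodesicExtension

variable {α : Type*} [PseudoMetricSpace α] {K ε : ℝ} {m n : ℕ} {γ η σ β : ℕ → α}

theorem isGeodesic_of_le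
    (h : ∀ i j : ℕ, i ≤ j → j ≤ n → dist (γ i) (γ j) = (j : ℝ) - i) :
    IsGeodesic dist n γ := by
  intro i j hi hj
  rcases le_total i j with hij | hij
  · rw [abs_natCast_sub_natCast_of_le hij, h i j hij hj]
  · rw [dist_comm, abs_sub_comm, abs_natCast_sub_natCast_of_le hij, h j i hij hi]

theorem isQuasigeodesic_of_le
    (h : ∀ i j : ℕ, i ≤ j → j ≤ n → (1 / K) * ((j : ℝ) - i) - ε ≤ dist (γ i) (γ j) ∧
      dist (γ i) (γ j) ≤ K * ((j : ℝ) - i) + ε) :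
    IsQuasigeodesic dist K ε n γ := by
  intro i j hi hj
  rcases le_total i j with hij | hij
  · exact abs_natCast_sub_natCast_of_le hij ▸ h i j hij hj
  · rw [dist_comm, abs_sub_comm]
    exact abs_natCast_sub_natCast_of_le hij ▸ h j i hij hi

theorem isGeodesic_of_dist_succ_le (h : ∀ i < n, dist (γ i) (γ (i + 1)) ≤ 1)
    (hn : n ≤ dist (γ 0) (γ n)) : IsGeodesic dist n γ := by
  have hle : ∀ i j : ℕ, i ≤ j → j ≤ n → dist (γ i) (γ j) ≤ (j : ℝ) - i := by
    intro i j hij hj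
    simpa [Nat.cast_sub hij] using
      dist_le_Ico_sum_of_dist_le (f := γ) (d := fun _ => 1) hij
        fun _ hk => h _ (hk.trans_le hj)
  refine isGeodesic_of_le fun i j hij hj => le_antisymm (hle i j hij hj) ?_
  have h0i := hle 0 i i.zero_le (hij.trans hj)
  have hjn := hle j n hj le_rfl
  have htri := dist_triangle4 (γ 0) (γ i) (γ j) (γ n)
  push_cast at h0i
  linarith

theorem IsQuasigeodesic.bounds_of_between (hK : 1 ≤ K) (hε : 0 ≤ ε)
    (hβ : IsQuasigeodesic dist K ε n β) {x y : α} {k : ℕ} (hk : k ≤ n)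
    (hy : dist x y + dist y (β 0) = dist x (β 0)) (hnearest : dist x (β 0) ≤ dist x (β k)) :
    dist y (β 0) + k ≤ (2 * K + 1) * (dist y (β k) + ε) ∧
      dist y (β k) ≤ (2 * K + 1) * (dist y (β 0) + k) + ε := by
  have hy_nearest : dist y (β 0) ≤ dist y (β k) := by linarith [dist_triangle x y (β k)]
  have hchord_le : dist (β 0) (β k) ≤ 2 * dist y (β k) := by
    linarith [dist_triangle_left (β 0) (β k) y]
  have hk_le : (k : ℝ) ≤ K * (dist (β 0) (β k) + ε) := by
    simpa using hβ.sub_le (by linarith) k.zero_le hk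
  have hchord_le_length : dist (β 0) (β k) ≤ K * k + ε := by
    simpa using (hβ.bounds_of_le k.zero_le hk).2
  constructor
  · have : K * (dist (β 0) (β k) + ε) ≤ K * (2 * dist y (β k) + ε) := by gcongr
    nlinarith
  · nlinarith [dist_triangle y (β 0) (β k), dist_nonneg (x := y) (y := β 0),
      k.cast_nonneg (α := ℝ)]

theorem IsQuasigeodesic.concat (hK : 1 ≤ K) (hε : 0 ≤ ε) (hσ : IsGeodesic dist m σ)
    (hβ : IsQuasigeodesic dist K ε n β) (hσβ : σ m = β 0)
    (hnearest : ∀ i ≤ n, dist (σ 0) (β 0) ≤ dist (σ 0) (β i)) :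
    IsQuasigeodesic dist (2 * K + 1) ε (m + n) (concatPath m σ β) := by
  have hK' : K ≤ 2 * K + 1 := by linarith
  have hσ' := hσ.isQuasigeodesic.mono one_pos (by linarith : 1 ≤ 2 * K + 1) hε
  have hβ' := hβ.mono (by linarith) hK' le_rfl
  refine isQuasigeodesic_of_le fun i j hij hj => ?_
  rcases le_total j m with hjm | hmj
  · rw [concatPath_of_le hjm, concatPath_of_le (hij.trans hjm)]
    exact hσ'.bounds_of_le hij hjm
  obtain ⟨k, rfl⟩ := Nat.exists_eq_add_of_le hmj
  have hk : k ≤ n := by lia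
  rcases le_total m i with hmi | him
  · obtain ⟨i, rfl⟩ := Nat.exists_eq_add_of_le hmi
    rw [concatPath_add hσβ, concatPath_add hσβ]
    simpa using hβ'.bounds_of_le (by lia : i ≤ k) hk
  rw [concatPath_add hσβ, concatPath_of_le him]
  have him_dist : dist (σ i) (β 0) = m - i := hσβ ▸ hσ.eq_sub him le_rfl
  have hbetween : dist (σ 0) (σ i) + dist (σ i) (β 0) = dist (σ 0) (β 0) := by
    rw [him_dist, hσ.eq_sub i.zero_le him, ← hσβ, hσ.eq_length]
    simp
  obtain ⟨hlow, hup⟩ := hβ.bounds_of_between hK hε hk hbetween (hnearest k hk)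
  rw [him_dist, ← add_sub_right_comm] at hlow hup
  push_cast
  exact ⟨by rwa [sub_le_iff_le_add, one_div, inv_mul_le_iff₀ (by linarith)], hup⟩

theorem IsQuasigeodesic.exists_extension (hα : HasDiscreteGeodesics (dist : α → α → ℝ))
    (hK : 1 ≤ K) (hε : 0 ≤ ε) (hη : IsQuasigeodesic dist K ε n η) {u v : α} {D : ℝ}
    (hu : dist u (η 0) ≤ D) (hv : dist v (η n) ≤ D) (hD : 3 * D ≤ dist (η 0) (η n))
    (hu_nearest : ∀ i ≤ n, dist u (η 0) ≤ dist u (η i))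
    (hv_nearest : ∀ i ≤ n, dist v (η n) ≤ dist v (η i)) :
    ∃ (m : ℕ) (θ : ℕ → α), IsQuasigeodesic dist (2 * (2 * K + 1) + 1) ε m θ ∧
      θ 0 = v ∧ θ m = u ∧ ∀ i ≤ n, ∃ j ≤ m, θ j = η i := by
  obtain ⟨k, σ, rfl, hσk, hσ⟩ := hα u (η 0)
  obtain ⟨l, τ, rfl, hτl, hτ⟩ := hα v (η n)
  set ζ := concatPath k σ η with hζ_def
  have hζη (i : ℕ) : ζ (k + i) = η i := concatPath_add hσk i
  have hζ : IsQuasigeodesic dist (2 * K + 1) ε (k + n) ζ := hη.concat hK hε hσ hσk hu_nearest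
  have hζ_nearest : ∀ i ≤ k + n, dist (τ 0) (η n) ≤ dist (τ 0) (ζ i) := by
    intro i hi
    rcases le_total i k with hik | hki
    · have hσ0 : dist (σ 0) (η 0) = k := hσk ▸ hσ.eq_length
      have hσi : dist (σ i) (η 0) = k - i := hσk ▸ hσ.eq_sub hik le_rfl
      rw [hζ_def, concatPath_of_le hik]
      linarith [dist_triangle_left (η 0) (η n) (σ i), dist_triangle_left (σ i) (η n) (τ 0),
        i.cast_nonneg (α := ℝ)]
    · obtain ⟨i, rfl⟩ := Nat.exists_eq_add_of_le hki
      rw [hζη]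
      exact hv_nearest i (by lia)
  have hτζ : τ l = ζ (k + n - 0) := by rw [hτl, Nat.sub_zero, hζη]
  refine ⟨l + (k + n), _, hζ.reverse.concat (by linarith) hε hτ hτζ fun i _ => ?_,
    concatPath_of_le l.zero_le, ?_, fun i hi => ⟨l + (n - i), by lia, ?_⟩⟩
  · simpa [hζη] using hζ_nearest (k + n - i) (Nat.sub_le _ _)
  · rw [concatPath_add hτζ, Nat.sub_self, hζ_def, concatPath_of_le k.zero_le]
  · rw [concatPath_add hτζ, show k + n - (n - i) = k + i by lia, hζη]

theorem IsQuasigeodesic.exists_extension_through_midpoint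
    (hα : HasDiscreteGeodesics (dist : α → α → ℝ)) (hK : 1 ≤ K) (hε : 0 ≤ ε)
    (hη : IsQuasigeodesic dist K ε n η) {u v : α} {D : ℝ}
    (hu : dist u (η 0) ≤ D) (hv : dist v (η n) ≤ D) (hn : K * (7 * D + 3 * ε) + 1 ≤ n) :
    ∃ (m : ℕ) (θ : ℕ → α), IsQuasigeodesic dist (2 * (2 * K + 1) + 1) ε m θ ∧
      θ 0 = v ∧ θ m = u ∧ ∃ j ≤ m, θ j = η (n / 2) := by
  have hK0 : 0 < K := by linarith
  have hD : 0 ≤ D := dist_nonneg.trans hu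
  obtain ⟨p, hp, hp_min⟩ := Set.exists_min_image (Set.Iic n) (fun i => dist u (η i))
    (Set.finite_Iic n) ⟨0, n.zero_le⟩
  obtain ⟨q, hq, hq_min⟩ := Set.exists_min_image (Set.Iic n) (fun i => dist v (η i))
    (Set.finite_Iic n) ⟨0, n.zero_le⟩
  have hup : dist u (η p) ≤ D := (hp_min 0 n.zero_le).trans hu
  have hvq : dist v (η q) ≤ D := (hq_min n Set.self_mem_Iic).trans hv
  have hp_le : (p : ℝ) ≤ K * (2 * D + ε) := calc
    (p : ℝ) ≤ K * (dist (η 0) (η p) + ε) := by simpa using hη.sub_le hK0 p.zero_le hp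
    _ ≤ K * (2 * D + ε) := by gcongr; linarith [dist_triangle_left (η 0) (η p) u]
  have hq_ge : (n : ℝ) - q ≤ K * (2 * D + ε) := calc
    (n : ℝ) - q ≤ K * (dist (η q) (η n) + ε) := hη.sub_le hK0 hq le_rfl
    _ ≤ K * (2 * D + ε) := by gcongr; linarith [dist_triangle_left (η q) (η n) v]
  have hKD : 0 ≤ K * (3 * D + ε) := by positivity
  have hpm : p ≤ n / 2 := by
    have : (2 * p + 1 : ℝ) ≤ n := by linarith
    norm_cast at this; lia
  have hmq : n / 2 ≤ q := by
    have : (n + 1 : ℝ) ≤ 2 * q := by linarith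
    norm_cast at this; lia
  obtain ⟨l, rfl⟩ := Nat.exists_eq_add_of_le (hpm.trans hmq)
  have hpq : 3 * D ≤ dist (η p) (η (p + l)) := by
    have := hη.sub_le hK0 (hpm.trans hmq) hq
    have : K * (3 * D + ε) ≤ K * (dist (η p) (η (p + l)) + ε) := by linarith
    linarith [le_of_mul_le_mul_left this hK0]
  obtain ⟨m, θ, hθ, hθ0, hθm, hθη⟩ := (hη.comp_add_left hq).exists_extension hα hK hε hup hvq hpq
    (fun i hi => hp_min (p + i) ((Nat.add_le_add_left hi p).trans hq))
    (fun i hi => hq_min (p + i) ((Nat.add_le_add_left hi p).trans hq))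
  obtain ⟨j, hj, hθj⟩ := hθη (n / 2 - p) (by lia)
  exact ⟨m, θ, hθ, hθ0, hθm, j, hj, by rw [hθj, Nat.add_sub_cancel' hpm]⟩

end QuasigeodesicExtension

section StableEmbedding

/-- A map `φ` that, with respect to the distance functions `dX` and `dY`, is a
`(μ, c)`-quasi-isometric embedding and sends every geodesic to an `f`-stable path. A stable
subgroup is one whose inclusion is of this kind for word metrics. -/
structure IsStableEmbedding {X Y : Type*} (dX : X → X → ℝ) (dY : Y → Y → ℝ) (f : ℝ → ℝ → ℝ)
    (μ c : ℝ) (φ : X → Y) : Prop where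
  one_le : 1 ≤ μ
  nonneg : 0 ≤ c
  bounds : ∀ x y, (1 / μ) * dX x y - c ≤ dY (φ x) (φ y) ∧ dY (φ x) (φ y) ≤ μ * dX x y + c
  stable : ∀ (n : ℕ) (γ : ℕ → X), IsGeodesic dX n γ → IsStablePath dY f n (φ ∘ γ)

/-- Geodesic triangles are `δ`-slim, in a form in which two sides need not be chosen: every point
of the geodesic `β` is `δ`-close to a point `w` lying metrically between the opposite vertex `x` and
one of the endpoints of `β`. -/
def HasSlimTriangles {X : Type*} (d : X → X → ℝ) (δ : ℝ) : Prop :=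
  ∀ (n : ℕ) (β : ℕ → X), IsGeodesic d n β → ∀ x, ∀ i ≤ n,
    ∃ z, (z = β 0 ∨ z = β n) ∧ ∃ w, d x w + d w z = d x z ∧ d (β i) w ≤ δ

theorem IsStableEmbedding.isQuasigeodesic {X Y : Type*} {dX : X → X → ℝ} {dY : Y → Y → ℝ}
    {f : ℝ → ℝ → ℝ} {μ c : ℝ} {φ : X → Y} (h : IsStableEmbedding dX dY f μ c φ) {n : ℕ}
    {γ : ℕ → X} (hγ : IsGeodesic dX n γ) : IsQuasigeodesic dY μ c n (φ ∘ γ) := fun i j hi hj =>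
  hγ i j hi hj ▸ h.bounds (γ i) (γ j)

variable {X Y : Type*} [PseudoMetricSpace Y] {dX : X → X → ℝ} {f : ℝ → ℝ → ℝ} {μ c : ℝ}
  {φ : X → Y}

theorem IsStableEmbedding.exists_between_of_nearest (h : IsStableEmbedding dX dist f μ c φ)
    (hX : HasDiscreteGeodesics dX) (hY : HasDiscreteGeodesics (dist : Y → Y → ℝ))
    {n : ℕ} {β : ℕ → X} (hβ : IsQuasigeodesic dist μ c n (φ ∘ β)) (x : X)
    (hnearest : ∀ i ≤ n, dist (φ x) (φ (β 0)) ≤ dist (φ x) (φ (β i))) {i : ℕ} (hi : i ≤ n) :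
    ∃ w, dX x w + dX w (β n) = dX x (β n) ∧ dist (φ (β i)) (φ w) ≤ f (2 * μ + 1) c := by
  obtain ⟨m, σ, hσ0, hσm, hσ⟩ := hY (φ x) (φ (β 0))
  obtain ⟨k, α, rfl, hαk, hα⟩ := hX x (β n)
  have hζ := hβ.concat h.one_le h.nonneg hσ hσm (by simpa [hσ0] using hnearest)
  have hζβ := concatPath_add (m := m) (σ := σ) (β := φ ∘ β) hσm
  obtain ⟨s, hs, hsi⟩ := h.stable k α hα (2 * μ + 1) c (by linarith [h.one_le]) h.nonneg _ _ hζ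
    ⟨0, k.zero_le, by rw [concatPath_of_le m.zero_le, hσ0, Function.comp_apply]⟩
    ⟨k, le_rfl, by rw [hζβ, Function.comp_apply, Function.comp_apply, hαk]⟩
    (m + i) (by lia)
  refine ⟨α s, ?_, by simpa only [hζβ, Function.comp_apply] using hsi⟩
  rw [← hαk, hα.eq_sub s.zero_le hs, hα.eq_sub hs le_rfl, hα.eq_length]
  simp

theorem IsStableEmbedding.hasSlimTriangles (h : IsStableEmbedding dX dist f μ c φ)
    (hX : HasDiscreteGeodesics dX) (hY : HasDiscreteGeodesics (dist : Y → Y → ℝ)) :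
    HasSlimTriangles dX (μ * (f (2 * μ + 1) c + c)) := by
  intro n β hβ x i hi
  have hμ : 0 < μ := by linarith [h.one_le]
  have hqg := h.isQuasigeodesic hβ
  obtain ⟨p, hp, hp_min⟩ := Set.exists_min_image (Set.Iic n) (fun i => dist (φ x) (φ (β i)))
    (Set.finite_Iic n) ⟨0, n.zero_le⟩
  have dist_le {w : X} (hw : dist (φ (β i)) (φ w) ≤ f (2 * μ + 1) c) :
      dX (β i) w ≤ μ * (f (2 * μ + 1) c + c) := by
    rw [← inv_mul_le_iff₀ hμ, ← one_div]
    linarith [(h.bounds (β i) w).1]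
  rcases le_total p i with hpi | hip
  · obtain ⟨w, hw, hwi⟩ := h.exists_between_of_nearest hX hY (β := fun j => β (p + j))
      (hqg.comp_add_left (Nat.add_sub_cancel' hp).le) x
      (fun j hj => hp_min (p + j) (by simp only [Set.mem_Iic] at hp ⊢; lia))
      (i := i - p) (Nat.sub_le_sub_right hi p)
    rw [Nat.add_sub_cancel' hpi] at hwi
    rw [Nat.add_sub_cancel' hp] at hw
    exact ⟨β n, Or.inr rfl, w, hw, dist_le hwi⟩
  · have hqg_p : IsQuasigeodesic dist μ c p (φ ∘ β) := fun i j hi hj =>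
      hqg i j (hi.trans hp) (hj.trans hp)
    obtain ⟨w, hw, hwi⟩ := h.exists_between_of_nearest hX hY (n := p) (β := fun j => β (p - j))
      hqg_p.reverse x
      (fun j _ => hp_min (p - j) ((p.sub_le j).trans hp)) (i := p - i) (p.sub_le i)
    rw [Nat.sub_sub_self hip] at hwi
    rw [Nat.sub_self] at hw
    exact ⟨β 0, Or.inl rfl, w, hw, dist_le hwi⟩

theorem IsStableEmbedding.exists_dist_midpoint_le (h : IsStableEmbedding dX dist f μ c φ)
    (hX : HasDiscreteGeodesics dX) (hY : HasDiscreteGeodesics (dist : Y → Y → ℝ))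
    {K ε D : ℝ} (hK : 1 ≤ K) (hε : 0 ≤ ε) {n : ℕ} {η : ℕ → Y}
    (hη : IsQuasigeodesic dist K ε n η) {u v : X} (hu : dist (φ u) (η 0) ≤ D)
    (hv : dist (φ v) (η n) ≤ D) (hn : K * (7 * D + 3 * ε) + 1 ≤ n) :
    ∃ w, dist (η (n / 2)) (φ w) ≤ f (2 * (2 * K + 1) + 1) ε := by
  obtain ⟨m, θ, hθ, hθ0, hθm, j, hj, hθj⟩ :=
    hη.exists_extension_through_midpoint hY hK hε hu hv hn
  obtain ⟨k, α, rfl, rfl, hα⟩ := hX u v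
  obtain ⟨s, -, hs⟩ := h.stable k α hα _ ε (by linarith) hε m θ hθ ⟨k, le_rfl, hθ0⟩
    ⟨0, k.zero_le, hθm⟩ j hj
  exact ⟨α s, hθj ▸ hs⟩

end StableEmbedding

section SlimTriangles

variable {X : Type*} [PseudoMetricSpace X] {δ r : ℝ}

theorem HasSlimTriangles.dist_le_of_forall_exists_le_dist
    (h : HasSlimTriangles (dist : X → X → ℝ) δ)
    (hX : HasDiscreteGeodesics (dist : X → X → ℝ)) {A : Set X} {x x' : X}
    (hx : ∀ y ∈ A, dist y x ≤ r) (hx' : ∀ y ∈ A, dist y x' ≤ r)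
    (hr : ∀ m, ∃ y ∈ A, r ≤ dist y m) : dist x x' ≤ 4 * δ + 1 := by
  obtain ⟨n, β, rfl, rfl, hβ⟩ := hX x x'
  have hmid : n / 2 ≤ n := n.div_le_self 2
  obtain ⟨y, hy, hry⟩ := hr (β (n / 2))
  obtain ⟨z, hz, w, hw, hmw⟩ := h n β hβ y (n / 2) hmid
  have hyz : dist y z ≤ r := by rcases hz with rfl | rfl <;> [exact hx y hy; exact hx' y hy]
  have hmz_le : dist (β (n / 2)) z ≤ 2 * δ := by
    linarith [dist_triangle_right y (β (n / 2)) w, dist_triangle (β (n / 2)) w z]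
  have hmz_ge : (n : ℝ) - 1 ≤ 2 * dist (β (n / 2)) z := by
    have h₁ : (n : ℝ) ≤ 2 * (n / 2 : ℕ) + 1 := by norm_cast; lia
    have h₂ : 2 * (n / 2 : ℕ) ≤ (n : ℝ) := by norm_cast; lia
    rcases hz with rfl | rfl
    · rw [dist_comm, hβ.eq_sub (Nat.zero_le _) hmid]
      push_cast; linarith
    · rw [hβ.eq_sub hmid le_rfl]
      linarith
  rw [hβ.eq_length]
  linarith

end SlimTriangles

section WordMetric

variable {G : Type*} [Group G] {S : Set G}

theorem wordLength_prod_le {l : List G} (hl : ∀ x ∈ l, x ∈ S ∨ x⁻¹ ∈ S) :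
    wordLength S l.prod ≤ l.length :=
  Nat.sInf_le ⟨l, rfl, hl, rfl⟩

theorem exists_list_length_eq_wordLength (hS : Subgroup.closure S = ⊤) (g : G) :
    ∃ l : List G, l.length = wordLength S g ∧ (∀ x ∈ l, x ∈ S ∨ x⁻¹ ∈ S) ∧ l.prod = g := by
  have hg : g ∈ Submonoid.closure (S ∪ S⁻¹) := by
    rw [← Subgroup.closure_toSubmonoid, hS]
    exact Subgroup.mem_top g
  obtain ⟨l, hl, hlg⟩ := Submonoid.exists_list_of_mem_closure hg
  exact Nat.sInf_mem
    (s := {n | ∃ l : List G, l.length = n ∧ (∀ x ∈ l, x ∈ S ∨ x⁻¹ ∈ S) ∧ l.prod = g})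
    ⟨l.length, l, rfl, hl, hlg⟩

theorem wordLength_one : wordLength S 1 = 0 :=
  Nat.le_zero.1 (wordLength_prod_le (l := []) (by simp))

theorem wordLength_mul_le (hS : Subgroup.closure S = ⊤) (g h : G) :
    wordLength S (g * h) ≤ wordLength S g + wordLength S h := by
  obtain ⟨l, hl_len, hl, rfl⟩ := exists_list_length_eq_wordLength hS g
  obtain ⟨k, hk_len, hk, rfl⟩ := exists_list_length_eq_wordLength hS h
  rw [← hl_len, ← hk_len, ← List.prod_append, ← List.length_append]
  exact wordLength_prod_le (List.forall_mem_append.2 ⟨hl, hk⟩)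

theorem wordLength_inv (hS : Subgroup.closure S = ⊤) (g : G) :
    wordLength S g⁻¹ = wordLength S g := by
  have hle (g : G) : wordLength S g⁻¹ ≤ wordLength S g := by
    obtain ⟨l, hl_len, hl, rfl⟩ := exists_list_length_eq_wordLength hS g
    rw [← hl_len, List.prod_inv_reverse]
    refine (wordLength_prod_le fun x hx => ?_).trans_eq (by simp)
    simpa [or_comm] using hl x⁻¹ (by simpa using hx)
  exact (hle g).antisymm (by simpa using hle g⁻¹)

theorem wordDist_mul_left (g x y : G) : wordDist S (g * x) (g * y) = wordDist S x y := by
  simp only [wordDist, mul_inv_rev, mul_assoc, inv_mul_cancel_left]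

/-- The word metric with respect to a generating set, as a pseudo-metric structure. It is not an
instance because it depends on the generating set. -/
noncomputable abbrev wordPseudoMetricSpace (hS : Subgroup.closure S = ⊤) :
    PseudoMetricSpace G where
  dist := wordDist S
  dist_self x := by simp [wordDist, wordLength_one]
  dist_comm x y := by
    simp only [wordDist]
    rw [← wordLength_inv hS, mul_inv_rev, inv_inv]
  dist_triangle x y z := by
    simp only [wordDist]
    rw [← mul_inv_cancel_left y z, ← mul_assoc, inv_mul_cancel_left]
    exact_mod_cast wordLength_mul_le hS _ _

theorem hasDiscreteGeodesics_wordDist (hS : Subgroup.closure S = ⊤) :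
    HasDiscreteGeodesics (wordDist S) := by
  let := wordPseudoMetricSpace hS
  intro x y
  obtain ⟨l, hl_len, hl, hl_prod⟩ := exists_list_length_eq_wordLength hS (x⁻¹ * y)
  have hend : x * (l.take l.length).prod = y := by rw [List.take_length, hl_prod]; group
  refine ⟨l.length, fun i => x * (l.take i).prod, by simp, hend,
    isGeodesic_of_dist_succ_le (fun i hi => ?_) ?_⟩
  · change wordDist S _ _ ≤ 1
    rw [wordDist_mul_left, List.take_add_one, List.prod_append, wordDist, inv_mul_cancel_left,
      List.getElem?_eq_getElem hi]
    exact_mod_cast wordLength_prod_le (l := [l[i]]) (by simpa using hl _ (l.getElem_mem hi))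
  · change (l.length : ℝ) ≤ wordDist S _ _
    rw [hend, List.take_zero, List.prod_nil, mul_one, wordDist, hl_len]

theorem finite_setOf_wordDist_one_le (hSfin : S.Finite) (hS : Subgroup.closure S = ⊤) (r : ℝ) :
    {g | wordDist S 1 g ≤ r}.Finite := by
  have : Finite ↥(S ∪ S⁻¹) := (hSfin.union hSfin.inv).to_subtype
  refine ((List.finite_length_le ↥(S ∪ S⁻¹) ⌊r⌋₊).image fun l => (l.map (↑)).prod).subset ?_
  intro g hg
  obtain ⟨l, hl_len, hl, hlg⟩ := exists_list_length_eq_wordLength hS g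
  lift l to List ↥(S ∪ S⁻¹) using hl
  refine ⟨l, Nat.le_floor ?_, hlg⟩
  simpa [wordDist, ← hl_len] using hg

end WordMetric

section Conjugation

variable {G G' : Type*} [Group G] [Group G']

theorem conjSub_eq_smul (g : G) (K : Subgroup G) : conjSub g K = MulAut.conj g • K := rfl

theorem conjSub_mul (g h : G) (K : Subgroup G) : conjSub (g * h) K = conjSub g (conjSub h K) := by
  simp only [conjSub_eq_smul, map_mul, mul_smul]

theorem conjSub_conjSub_inv (g : G) (K : Subgroup G) : conjSub g (conjSub g⁻¹ K) = K := by
  simp only [conjSub_eq_smul, map_inv, smul_inv_smul]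

theorem conjSub_mul_of_mem {K : Subgroup G} {h : G} (hh : h ∈ K) (g : G) :
    conjSub (g * h) K = conjSub g K := by
  rw [conjSub_mul, conjSub_eq_smul h, Subgroup.conj_smul_eq_self_of_mem hh]

theorem conjSub_sInf (g : G) (𝒥 : Set (Subgroup G)) :
    conjSub g (sInf 𝒥) = sInf (conjSub g '' 𝒥) := by
  rw [sInf_image]
  exact (MulAut.conj g).mapSubgroup.map_sInf 𝒥

theorem map_conjSub (φ : G →* G') (g : G) (K : Subgroup G) :
    (conjSub g K).map φ = conjSub (φ g) (K.map φ) := by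
  simp only [conjSub, Subgroup.map_map]
  congr 1
  ext x
  simp

/-- The subgroups in `𝒜` lie in finitely many conjugacy classes. The set `F` of representatives
need not be contained in `𝒜`. -/
def HasFinitelyManyConjClasses (𝒜 : Set (Subgroup G)) : Prop :=
  ∃ F : Set (Subgroup G), F.Finite ∧ ∀ A ∈ 𝒜, ∃ K ∈ F, ∃ t, A = conjSub t K

namespace HasFinitelyManyConjClasses

variable {𝒜 ℬ : Set (Subgroup G)}

theorem of_forall_exists_conjSub (h : HasFinitelyManyConjClasses ℬ)
    (h𝒜 : ∀ A ∈ 𝒜, ∃ t, ∃ K ∈ ℬ, A = conjSub t K) : HasFinitelyManyConjClasses 𝒜 := by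
  obtain ⟨F, hF, h⟩ := h
  refine ⟨F, hF, fun A hA => ?_⟩
  obtain ⟨t, _, hB, rfl⟩ := h𝒜 A hA
  obtain ⟨K, hK, s, rfl⟩ := h _ hB
  exact ⟨K, hK, t * s, (conjSub_mul t s K).symm⟩

theorem union (h𝒜 : HasFinitelyManyConjClasses 𝒜) (hℬ : HasFinitelyManyConjClasses ℬ) :
    HasFinitelyManyConjClasses (𝒜 ∪ ℬ) := by
  obtain ⟨F, hF, h𝒜⟩ := h𝒜
  obtain ⟨E, hE, hℬ⟩ := hℬ
  refine ⟨F ∪ E, hF.union hE, ?_⟩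
  rintro A (hA | hA)
  · obtain ⟨K, hK, hAK⟩ := h𝒜 A hA
    exact ⟨K, Or.inl hK, hAK⟩
  · obtain ⟨K, hK, hAK⟩ := hℬ A hA
    exact ⟨K, Or.inr hK, hAK⟩

theorem iUnion {ι : Type*} [Finite ι] {𝒜 : ι → Set (Subgroup G)}
    (h : ∀ i, HasFinitelyManyConjClasses (𝒜 i)) : HasFinitelyManyConjClasses (⋃ i, 𝒜 i) := by
  choose F hF h using h
  refine ⟨⋃ i, F i, Set.finite_iUnion hF, fun A hA => ?_⟩
  obtain ⟨i, hi⟩ := Set.mem_iUnion.1 hA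
  obtain ⟨K, hK, hAK⟩ := h i A hi
  exact ⟨K, Set.mem_iUnion_of_mem i hK, hAK⟩

theorem image_map (h : HasFinitelyManyConjClasses 𝒜) (φ : G →* G') :
    HasFinitelyManyConjClasses (Subgroup.map φ '' 𝒜) := by
  obtain ⟨F, hF, h⟩ := h
  refine ⟨Subgroup.map φ '' F, hF.image _, ?_⟩
  rintro _ ⟨A, hA, rfl⟩
  obtain ⟨K, hK, t, rfl⟩ := h A hA
  exact ⟨K.map φ, Set.mem_image_of_mem _ hK, φ t, map_conjSub φ t K⟩

end HasFinitelyManyConjClasses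

/-- The set of all conjugates in `G` of the members of a family `H` of subgroups. -/
def conjugates {ι : Type*} (H : ι → Subgroup G) : Set (Subgroup G) :=
  {K | ∃ i g, K = conjSub g (H i)}

end Conjugation

section FiniteSubgroups

theorem exists_minimax_of_finite {α β : Type*} [Nonempty β] {A : Set α} (hA : A.Finite)
    (hne : A.Nonempty) (d : α → β → ℕ) :
    ∃ x r, (∀ y ∈ A, d y x ≤ r) ∧ ∀ z, ∃ y ∈ A, r ≤ d y z := by
  lift A to Finset α using hA
  refine ⟨Function.argmin fun z => A.sup (d · z), _,
    fun y hy => Finset.le_sup (f := (d · _)) hy, fun z => ?_⟩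
  obtain ⟨y, hy, hyz⟩ := A.exists_mem_eq_sup hne (d · z)
  exact ⟨y, hy, hyz ▸ Function.argmin_le (fun z => A.sup (d · z)) z⟩

variable {G : Type*} [Group G] {S : Set G} {δ : ℝ}

theorem HasSlimTriangles.exists_wordDist_mul_le (hS : Subgroup.closure S = ⊤)
    (h : HasSlimTriangles (wordDist S) δ) (A : Subgroup G) [Finite A] :
    ∃ x, ∀ a ∈ A, wordDist S x (a * x) ≤ 4 * δ + 1 := by
  let := wordPseudoMetricSpace hS
  obtain ⟨x, r, hx, hr⟩ := exists_minimax_of_finite (Set.toFinite (A : Set G)) ⟨1, A.one_mem⟩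
    fun y z => wordLength S (y⁻¹ * z)
  refine ⟨x, fun a ha => h.dist_le_of_forall_exists_le_dist (r := r) (A := A)
    (hasDiscreteGeodesics_wordDist hS) (fun y hy => Nat.cast_le.2 (hx y hy)) (fun y hy => ?_)
    fun z => ?_⟩
  · change wordDist S y (a * x) ≤ r
    rw [← wordDist_mul_left a⁻¹, inv_mul_cancel_left]
    exact Nat.cast_le.2 (hx _ (A.mul_mem (A.inv_mem ha) hy))
  · obtain ⟨y, hy, hry⟩ := hr z
    exact ⟨y, hy, Nat.cast_le.2 hry⟩

theorem HasSlimTriangles.hasFinitelyManyConjClasses (hSfin : S.Finite)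
    (hS : Subgroup.closure S = ⊤) (h : HasSlimTriangles (wordDist S) δ) :
    HasFinitelyManyConjClasses {A : Subgroup G | Finite A} := by
  have hfin : {K : Subgroup G | (K : Set G) ⊆ {g | wordDist S 1 g ≤ 4 * δ + 1}}.Finite :=
    (finite_setOf_wordDist_one_le hSfin hS _).finite_subsets.preimage
      SetLike.coe_injective.injOn
  refine ⟨_, hfin, fun A hA => ?_⟩
  have : Finite A := hA
  obtain ⟨x, hx⟩ := h.exists_wordDist_mul_le hS A
  refine ⟨conjSub x⁻¹ A, ?_, x, (conjSub_conjSub_inv x A).symm⟩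
  rintro _ ⟨a, ha, rfl⟩
  change wordDist S 1 (x⁻¹ * a * x⁻¹⁻¹) ≤ _
  rw [← wordDist_mul_left x]
  simpa [mul_assoc] using hx a ha

end FiniteSubgroups

section StableSubgroups

variable {G : Type*} [Group G] {S : Set G}

theorem IsStableSubgroup.exists_isStableEmbedding {H : Subgroup G} (h : IsStableSubgroup S H) :
    ∃ (T : Set H) (f : ℝ → ℝ → ℝ) (μ c : ℝ), T.Finite ∧ Subgroup.closure T = ⊤ ∧
      IsStableEmbedding (wordDist T) (wordDist S) f μ c ((↑) : H → G) := by
  obtain ⟨f, T, hTfin, hT, ⟨μ, c, hμ, hc, hbounds⟩, hstable⟩ := h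
  exact ⟨T, f, μ, c, hTfin, hT, hμ, hc, hbounds, fun n γ hγ => (hstable n γ hγ).2⟩

theorem IsQuasigeodesic.mul_left {K ε : ℝ} {n : ℕ} {γ : ℕ → G}
    (h : IsQuasigeodesic (wordDist S) K ε n γ) (g : G) :
    IsQuasigeodesic (wordDist S) K ε n (fun i => g * γ i) := by
  simpa only [IsQuasigeodesic, wordDist_mul_left] using h

theorem IsStablePath.mul_left {f : ℝ → ℝ → ℝ} {n : ℕ} {γ : ℕ → G}
    (h : IsStablePath (wordDist S) f n γ) (g : G) :
    IsStablePath (wordDist S) f n (fun i => g * γ i) := by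
  intro K ε hK hε m η hη hη0 hηm j hj
  simp only [← inv_mul_eq_iff_eq_mul (a := g)] at hη0 hηm
  obtain ⟨i, hi, hdist⟩ := h K ε hK hε m _ (hη.mul_left g⁻¹) hη0 hηm j hj
  exact ⟨i, hi, by rwa [← wordDist_mul_left g⁻¹, inv_mul_cancel_left]⟩

theorem IsStableEmbedding.mul_left {X : Type*} {dX : X → X → ℝ} {f : ℝ → ℝ → ℝ} {μ c : ℝ}
    {φ : X → G} (h : IsStableEmbedding dX (wordDist S) f μ c φ) (g : G) :
    IsStableEmbedding dX (wordDist S) f μ c (fun x => g * φ x) where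
  one_le := h.one_le
  nonneg := h.nonneg
  bounds x y := by simpa only [wordDist_mul_left] using h.bounds x y
  stable n γ hγ := (h.stable n γ hγ).mul_left g

theorem IsStableSubgroup.hasFinitelyManyConjClasses_finite (hS : Subgroup.closure S = ⊤)
    {H : Subgroup G} (h : IsStableSubgroup S H) :
    HasFinitelyManyConjClasses {A : Subgroup G | Finite A ∧ A ≤ H} := by
  obtain ⟨T, f, μ, c, hTfin, hT, hφ⟩ := h.exists_isStableEmbedding
  let := wordPseudoMetricSpace hS
  have hslim := IsStableEmbedding.hasSlimTriangles hφ (hasDiscreteGeodesics_wordDist hT)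
    (hasDiscreteGeodesics_wordDist hS)
  refine ((hslim.hasFinitelyManyConjClasses hTfin hT).image_map H.subtype).of_forall_exists_conjSub
    fun A ⟨hA, hAH⟩ => ⟨1, A, ⟨A.subgroupOf H, ?_, Subgroup.map_subgroupOf_eq_of_le hAH⟩, ?_⟩
  · exact Finite.of_injective _ (Subgroup.subgroupOfEquivOfLe hAH).injective
  · simp [conjSub_eq_smul]

theorem hasFinitelyManyConjClasses_finite_le_conjugates (hS : Subgroup.closure S = ⊤)
    {ι : Type*} [Finite ι] {H : ι → Subgroup G} (hH : ∀ i, IsStableSubgroup S (H i)) :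
    HasFinitelyManyConjClasses {A : Subgroup G | Finite A ∧ ∃ K ∈ conjugates H, A ≤ K} := by
  refine (HasFinitelyManyConjClasses.iUnion fun i =>
    (hH i).hasFinitelyManyConjClasses_finite hS).of_forall_exists_conjSub ?_
  rintro A ⟨hA, _, ⟨i, g, rfl⟩, hAg⟩
  refine ⟨g, conjSub g⁻¹ A, Set.mem_iUnion_of_mem i ⟨?_, ?_⟩, (conjSub_conjSub_inv g A).symm⟩
  · exact Set.Finite.to_subtype (Set.Finite.image _ (Set.toFinite (A : Set G)))
  · simpa [conjSub_eq_smul, Subgroup.pointwise_smul_subset_iff, ← map_inv] using hAg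

theorem IsStableEmbedding.exists_conjSub_eq (hS : Subgroup.closure S = ⊤) {H : Subgroup G}
    {T : Set H} (hT : Subgroup.closure T = ⊤) {f : ℝ → ℝ → ℝ} {μ c : ℝ}
    (h : IsStableEmbedding (wordDist T) (wordDist S) f μ c (↑)) {K ε : ℝ} (hK : 1 ≤ K)
    (hε : 0 ≤ ε) {n : ℕ} {η : ℕ → G} (hη : IsQuasigeodesic (wordDist S) K ε n η) {a g : G}
    (hηn : η n = a * η 0) (ha : a ∈ conjSub g H)
    (hn : K * (7 * wordDist S g (η 0) + 3 * ε) + 1 ≤ n) :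
    ∃ b, wordDist S 1 b ≤ f (2 * (2 * K + 1) + 1) ε ∧
      conjSub g H = conjSub (η (n / 2) * b) H := by
  obtain ⟨v, hv, rfl⟩ := ha
  have hη0_near : wordDist S (g * (1 : H)) (η 0) ≤ wordDist S g (η 0) := by
    rw [OneMemClass.coe_one, mul_one]
  have hηn_near : wordDist S (g * v) (η n) ≤ wordDist S g (η 0) := by
    rw [hηn, ← wordDist_mul_left (g * v * g⁻¹) g, inv_mul_cancel_right]
    rfl
  let := wordPseudoMetricSpace hS
  obtain ⟨w, hw⟩ := IsStableEmbedding.exists_dist_midpoint_le (h.mul_left g)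
    (hasDiscreteGeodesics_wordDist hT) (hasDiscreteGeodesics_wordDist hS) hK hε hη
    (u := 1) (v := ⟨v, hv⟩) (D := wordDist S g (η 0)) hη0_near hηn_near hn
  refine ⟨(η (n / 2))⁻¹ * (g * w), ?_, ?_⟩
  · rwa [← wordDist_mul_left (η (n / 2)), mul_one, mul_inv_cancel_left]
  · rw [mul_inv_cancel_left, conjSub_mul_of_mem w.2]

theorem exists_long_geodesic_of_infinite {H : Subgroup G} {T : Set H} (hTfin : T.Finite)
    (hT : Subgroup.closure T = ⊤) {A : Subgroup G} [Infinite A] {g : G} (hA : A ≤ conjSub g H)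
    (N : ℕ) : ∃ n ≥ N, ∃ β : ℕ → H, IsGeodesic (wordDist T) n β ∧ β 0 = 1 ∧
      ∃ a ∈ A, g * β n = a * g := by
  have hfin : ((fun h : H => g * h * g⁻¹) '' {h | wordDist T 1 h ≤ N}).Finite :=
    (finite_setOf_wordDist_one_le hTfin hT N).image _
  obtain ⟨a, ha, hlong⟩ := (Set.infinite_coe_iff.1 ‹Infinite A›).exists_notMem_finite hfin
  obtain ⟨h, hh, rfl⟩ := hA ha
  obtain ⟨n, β, hβ0, hβn, hβ⟩ := hasDiscreteGeodesics_wordDist hT 1 ⟨h, hh⟩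
  refine ⟨n, ?_, β, hβ, hβ0, _, ha, by simp [hβn]⟩
  by_contra! hn
  refine hlong ⟨⟨h, hh⟩, ?_, rfl⟩
  change wordDist T 1 _ ≤ _
  rw [← hβ0, ← hβn, hβ.eq_length]
  exact_mod_cast hn.le

end StableSubgroups

section InfiniteIntersections

variable {G : Type*} [Group G] {S : Set G} {ι : Type*} [Finite ι] {H : ι → Subgroup G}

theorem exists_finite_forall_finite_subset_conjSub_image (hSfin : S.Finite)
    (hS : Subgroup.closure S = ⊤) (hH : ∀ i, IsStableSubgroup S (H i)) :
    ∃ C : Set (Subgroup G), C.Finite ∧ ∀ 𝒥 ⊆ conjugates H, 𝒥.Finite →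
      Infinite ↥(sInf 𝒥) → ∃ x, 𝒥 ⊆ conjSub x '' C := by
  choose T f μ c hTfin hT hφ using fun i => (hH i).exists_isStableEmbedding
  obtain ⟨R, hR⟩ := Finite.exists_le fun p : ι × ι => f p.2 (2 * (2 * μ p.1 + 1) + 1) (c p.1)
  refine ⟨_, (Set.finite_univ.prod (finite_setOf_wordDist_one_le hSfin hS R)).image
    fun p : ι × G => conjSub p.2 (H p.1), fun 𝒥 h𝒥 h𝒥fin hinf => ?_⟩
  rcases 𝒥.eq_empty_or_nonempty with rfl | ⟨J₀, hJ₀⟩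
  · exact ⟨1, Set.empty_subset _⟩
  have := h𝒥fin.to_subtype
  choose i g hJ using fun J : 𝒥 => h𝒥 J.2
  lift J₀ to 𝒥 using hJ₀
  set i₀ := i J₀
  set g₀ := g J₀
  obtain ⟨N, hN⟩ := Finite.exists_le fun J =>
    ⌈μ i₀ * (7 * wordDist S (g J) g₀ + 3 * c i₀) + 1⌉₊
  obtain ⟨n, hn, β, hβ, hβ0, a, ha, hβn⟩ := exists_long_geodesic_of_infinite (hTfin i₀) (hT i₀)
    ((sInf_le J₀.2).trans (hJ J₀).le) N
  have hη : IsQuasigeodesic (wordDist S) (μ i₀) (c i₀) n fun j => g₀ * (β j : G) :=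
    ((hφ i₀).isQuasigeodesic hβ).mul_left g₀
  refine ⟨g₀ * β (n / 2), fun J hJ𝒥 => ?_⟩
  lift J to 𝒥 using hJ𝒥
  obtain ⟨b, hb, hJb⟩ := (hφ (i J)).exists_conjSub_eq hS (hT _) (hφ i₀).one_le (hφ i₀).nonneg hη
    (a := a) (g := g J) (by simpa [hβ0] using hβn) (hJ J ▸ Subgroup.mem_sInf.1 ha J J.2)
    (by simpa [hβ0] using (Nat.ceil_le.1 ((hN J).trans hn)))
  refine ⟨conjSub b (H (i J)), ⟨(i J, b), ⟨trivial, hb.trans (hR (i₀, i J))⟩, rfl⟩, ?_⟩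
  rw [hJ J, hJb, ← conjSub_mul]

theorem exists_finite_forall_subset_conjSub_image (hSfin : S.Finite)
    (hS : Subgroup.closure S = ⊤) (hH : ∀ i, IsStableSubgroup S (H i)) :
    ∃ C : Set (Subgroup G), C.Finite ∧ ∀ 𝒥 ⊆ conjugates H, Infinite ↥(sInf 𝒥) →
      ∃ x, 𝒥 ⊆ conjSub x '' C := by
  obtain ⟨C, hC, h⟩ := exists_finite_forall_finite_subset_conjSub_image hSfin hS hH
  refine ⟨C, hC, fun 𝒥 h𝒥 hinf => h 𝒥 h𝒥 ?_ hinf⟩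
  by_contra h𝒥inf
  obtain ⟨ℱ, hℱ, hcard⟩ := Set.Infinite.exists_subset_card_eq h𝒥inf (C.ncard + 1)
  have : Infinite ↥(sInf (ℱ : Set (Subgroup G))) :=
    Set.infinite_coe_iff.2 ((Set.infinite_coe_iff.1 hinf).mono
      (sInf_le_sInf hℱ : sInf 𝒥 ≤ sInf (ℱ : Set (Subgroup G))))
  obtain ⟨x, hx⟩ := h ℱ (hℱ.trans h𝒥) ℱ.finite_toSet this
  have hle := (Set.ncard_le_ncard hx (hC.image _)).trans (Set.ncard_image_le hC)
  rw [Set.ncard_coe_finset, hcard] at hle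
  lia

theorem hasFinitelyManyConjClasses_infinite_sInf (hSfin : S.Finite)
    (hS : Subgroup.closure S = ⊤) (hH : ∀ i, IsStableSubgroup S (H i)) :
    HasFinitelyManyConjClasses {A | Infinite A ∧ ∃ 𝒥 ⊆ conjugates H, A = sInf 𝒥} := by
  obtain ⟨C, hC, h⟩ := exists_finite_forall_subset_conjSub_image hSfin hS hH
  refine ⟨sInf '' 𝒫 C, hC.powerset.image _, ?_⟩
  rintro _ ⟨hinf, 𝒥, h𝒥, rfl⟩
  obtain ⟨x, hx⟩ := h 𝒥 h𝒥 hinf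
  obtain ⟨C', hC', rfl⟩ := Set.subset_image_iff.1 hx
  exact ⟨sInf C', Set.mem_image_of_mem _ hC', x, (conjSub_sInf x C').symm⟩

end InfiniteIntersections

theorem finitely_many_conj_classes_of_intersections_general {G : Type*} [Group G] {S : Set G}
    (hSfin : S.Finite) (hSgen : Subgroup.closure S = ⊤) {ι : Type*} [Finite ι]
    {H : ι → Subgroup G} (hstable : ∀ i, IsStableSubgroup S (H i)) :
    HasFinitelyManyConjClasses {A | ∃ 𝒥 ⊆ conjugates H, A = sInf 𝒥} := by
  have hfinite := hasFinitelyManyConjClasses_finite_le_conjugates hSgen hstable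
  have hinfinite := hasFinitelyManyConjClasses_infinite_sInf hSfin hSgen hstable
  have htop : HasFinitelyManyConjClasses ({⊤} : Set (Subgroup G)) :=
    ⟨{⊤}, Set.finite_singleton _, fun A hA => ⟨A, hA, 1, by simp [conjSub_eq_smul]⟩⟩
  refine ((hfinite.union hinfinite).union htop).of_forall_exists_conjSub ?_
  rintro A ⟨𝒥, h𝒥, rfl⟩
  refine ⟨1, sInf 𝒥, ?_, by simp [conjSub_eq_smul]⟩
  rcases 𝒥.eq_empty_or_nonempty with rfl | ⟨J, hJ⟩
  · exact Or.inr sInf_empty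
  rcases finite_or_infinite ↥(sInf 𝒥) with hA | hA
  · exact Or.inl (Or.inl ⟨hA, J, h𝒥 hJ, sInf_le hJ⟩)
  · exact Or.inl (Or.inr ⟨hA, 𝒥, h𝒥, rfl⟩)

/-- **Finitely many conjugacy classes of intersections of conjugates.** -/
theorem finitely_many_conj_classes_of_intersections {G : Type*} [Group G] (S : Set G)
    (hSfin : S.Finite) (hSgen : Subgroup.closure S = ⊤) (l : ℕ) (H : Fin l → Subgroup G)
    (hstable : ∀ i, IsStableSubgroup S (H i)) :
    ∃ F : Finset (Subgroup G), ∀ (n : ℕ) (idx : Fin n → Fin l) (g : Fin n → G),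
      ∃ K ∈ F, ∃ t : G, (⨅ j : Fin n, conjSub (g j) (H (idx j))) = conjSub t K := by
  obtain ⟨F, hF, h⟩ := finitely_many_conj_classes_of_intersections_general hSfin hSgen hstable
  lift F to Finset (Subgroup G) using hF
  exact ⟨F, fun n idx g => h _ ⟨_, Set.range_subset_iff.2 fun j => ⟨idx j, g j, rfl⟩, rfl⟩⟩
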